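/- For integers n ≥ 2 define I_n(x) = ∫₀^x sin^{n−1}(s) ds, W_{n−1} = ∫₀^{π/2} sin^{n−1}(s) ds, and T_n = (1/(2W_{n−1})) · ∫₀^π I_n(x)·I_n(π−x) / sin^{n−1}(x) dx (with the same formulas also defining T_1). Then T_2 = 1, T_3 = 3/4, and for every n ≥ 3, (n−1)·T_n = (n−3)·T_{n−2} + 1/(n−1) + 1/(n−2). -/

import Mathlib

open Real

noncomputable def sphereMean (n : ℕ) : ℝ :=
  (1 / (2 * ∫ s in (0:ℝ)..(π/2), Real.sin s ^ (n - 1))) *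
    ∫ x in (0:ℝ)..π,
      (∫ s in (0:ℝ)..x, Real.sin s ^ (n - 1)) *
        (∫ s in (0:ℝ)..(π - x), Real.sin s ^ (n - 1)) / Real.sin x ^ (n - 1)

/-!
Let `J k x = ∫₀ˣ sin ^ k` and `F k x = J k x * J k (π - x) / sin x ^ k`, so that
`sphereMean (k + 1) = (∫₀^π F k) / J k π`. The reduction formula expresses `J (k + 2)` through
`J k`, hence `F (k + 2)` through `F k`, and on `(0, π)` this turns into
`d/dx (F k * cot) = k * F k - ((k + 2) ^ 2 * F (k + 2) + cos ^ 2 * sin ^ k) / (k + 1)`.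
Since `J k x ~ sin x ^ (k + 1) / (k + 1)` at `0`, the product `F k * cot` has the limits
`± J k π / (k + 1)` at the endpoints, and integrating over `(0, π)` gives the recursion.
-/

section

open Filter Topology MeasureTheory

/-- The incomplete sine-power integral `∫₀ˣ sin ^ k`, written `I_{k+1}(x)` in the paper: up to a
constant, the volume of a ball of radius `x` in the sphere of dimension `k + 1`. -/
noncomputable def sinPowIntegral (k : ℕ) (x : ℝ) : ℝ := ∫ s in (0 : ℝ)..x, sin s ^ k

/-- The integrand defining `sphereMean (k + 1)`. For `0 < k`, division by zero gives it the value
`0` at `0` and `π`, which is also its limit there. -/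
noncomputable def sphereMeanIntegrand (k : ℕ) (x : ℝ) : ℝ :=
  sinPowIntegral k x * sinPowIntegral k (π - x) / sin x ^ k

theorem hasDerivAt_sinPowIntegral (k : ℕ) (x : ℝ) :
    HasDerivAt (sinPowIntegral k) (sin x ^ k) x :=
  ((continuous_sin.pow k).integral_hasStrictDerivAt 0 x).hasDerivAt

@[fun_prop]
theorem continuous_sinPowIntegral (k : ℕ) : Continuous (sinPowIntegral k) :=
  continuous_iff_continuousAt.2 fun x ↦ (hasDerivAt_sinPowIntegral k x).continuousAt

theorem sinPowIntegral_zero_right (k : ℕ) : sinPowIntegral k 0 = 0 :=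
  intervalIntegral.integral_same

theorem sinPowIntegral_one (x : ℝ) : sinPowIntegral 1 x = 1 - cos x := by
  simp [sinPowIntegral]

theorem sinPowIntegral_pi_pos (k : ℕ) : 0 < sinPowIntegral k π :=
  integral_sin_pow_pos k

theorem sinPowIntegral_pi_sub (k : ℕ) (x : ℝ) :
    sinPowIntegral k (π - x) = sinPowIntegral k π - sinPowIntegral k x := by
  have hintegrable (a b : ℝ) : IntervalIntegrable (fun s ↦ sin s ^ k) volume a b :=
    (continuous_sin.pow k).intervalIntegrable a b
  calc sinPowIntegral k (π - x) = ∫ s in (0 : ℝ)..(π - x), sin (π - s) ^ k := by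
        simp only [sin_pi_sub, sinPowIntegral]
    _ = ∫ s in x..π, sin s ^ k := by
        rw [intervalIntegral.integral_comp_sub_left (fun s ↦ sin s ^ k), sub_sub_cancel, sub_zero]
    _ = sinPowIntegral k π - sinPowIntegral k x :=
        (intervalIntegral.integral_interval_sub_left (hintegrable 0 π) (hintegrable 0 x)).symm

theorem sinPowIntegral_pi_eq_two_mul (k : ℕ) :
    sinPowIntegral k π = 2 * sinPowIntegral k (π / 2) := by
  have h := sinPowIntegral_pi_sub k (π / 2)
  rw [sub_half] at h
  linarith

theorem sinPowIntegral_add_two (k : ℕ) (x : ℝ) :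
    (k + 2) * sinPowIntegral (k + 2) x =
      (k + 1) * sinPowIntegral k x - cos x * sin x ^ (k + 1) := by
  have hk : (k : ℝ) + 2 ≠ 0 := by positivity
  simp only [sinPowIntegral, integral_sin_pow, sin_zero, zero_pow k.succ_ne_zero]
  field_simp
  ring

theorem sinPowIntegral_add_two_pi (k : ℕ) :
    (k + 2) * sinPowIntegral (k + 2) π = (k + 1) * sinPowIntegral k π := by
  simp [sinPowIntegral_add_two]

theorem integral_cos_sq_mul_sin_pow (k : ℕ) :
    (k + 2) * ∫ x in (0 : ℝ)..π, cos x ^ 2 * sin x ^ k = sinPowIntegral k π := by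
  have hsplit : ∫ x in (0 : ℝ)..π, cos x ^ 2 * sin x ^ k =
      sinPowIntegral k π - sinPowIntegral (k + 2) π := by
    have hintegrable (m : ℕ) : IntervalIntegrable (fun x ↦ sin x ^ m) volume 0 π :=
      (continuous_sin.pow m).intervalIntegrable 0 π
    refine Eq.trans ?_ (intervalIntegral.integral_sub (hintegrable k) (hintegrable (k + 2)))
    congr with x
    rw [cos_sq']
    ring
  linear_combination (k + 2 : ℝ) * hsplit - sinPowIntegral_add_two_pi k

theorem hasDerivAt_cot {x : ℝ} (hx : sin x ≠ 0) : HasDerivAt cot (-1 / sin x ^ 2) x := by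
  have h := (hasDerivAt_cos x).div (hasDerivAt_sin x) hx
  refine (h.congr_deriv ?_).congr_of_eventuallyEq (.of_forall cot_eq_cos_div_sin)
  rw [← sin_sq_add_cos_sq x]
  ring

theorem eventually_sin_ne_zero_nhdsNE_zero : ∀ᶠ x : ℝ in 𝓝[≠] 0, sin x ≠ 0 := by
  simpa using (hasDerivAt_sin 0).eventually_ne (c := 0) (by simp)

theorem tendsto_sinPowIntegral_div_sin_pow (k : ℕ) :
    Tendsto (fun x ↦ sinPowIntegral k x / sin x ^ (k + 1)) (𝓝[≠] 0) (𝓝 (1 / (k + 1))) := by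
  have hcos : ∀ᶠ x : ℝ in 𝓝[≠] 0, cos x ≠ 0 :=
    (continuous_cos.continuousAt.eventually_ne (by simp)).filter_mono nhdsWithin_le_nhds
  have hk : (k : ℝ) + 1 ≠ 0 := by positivity
  refine HasDerivAt.lhopital_zero_nhdsNE (f' := fun x ↦ sin x ^ k)
    (g' := fun x ↦ (k + 1) * sin x ^ k * cos x)
    (.of_forall (hasDerivAt_sinPowIntegral k)) (.of_forall fun x ↦ ?_) ?_ ?_ ?_ ?_
  · simpa using (hasDerivAt_sin x).fun_pow (k + 1)
  · filter_upwards [hcos, eventually_sin_ne_zero_nhdsNE_zero] with x hc hs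
    positivity
  · exact ((continuous_sinPowIntegral k).tendsto' 0 0
      (sinPowIntegral_zero_right k)).mono_left nhdsWithin_le_nhds
  · exact ((continuous_sin.pow (k + 1)).tendsto' 0 0 (by simp)).mono_left nhdsWithin_le_nhds
  · have hlim : Tendsto (fun x : ℝ ↦ 1 / ((k + 1) * cos x)) (𝓝[≠] 0) (𝓝 (1 / (k + 1))) := by
      have hcont : ContinuousAt (fun x : ℝ ↦ 1 / ((k + 1) * cos x)) 0 := by
        fun_prop (disch := simpa using hk)
      simpa using hcont.tendsto.mono_left nhdsWithin_le_nhds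
    refine hlim.congr' ?_
    filter_upwards [hcos, eventually_sin_ne_zero_nhdsNE_zero] with x hc hs
    field_simp

theorem tendsto_sinPowIntegral_div_sin_pow_mul (k : ℕ) {g : ℝ → ℝ} (hg : ContinuousAt g 0) :
    Tendsto (fun x ↦ sinPowIntegral k x / sin x ^ (k + 1) * g x) (𝓝[≠] 0)
      (𝓝 (g 0 / (k + 1))) := by
  rw [← one_div_mul_eq_div]
  exact (tendsto_sinPowIntegral_div_sin_pow k).mul (hg.tendsto.mono_left nhdsWithin_le_nhds)

theorem sphereMean_add_one (k : ℕ) :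
    sphereMean (k + 1) =
      (∫ x in (0 : ℝ)..π, sphereMeanIntegrand k x) / sinPowIntegral k π := by
  rw [sinPowIntegral_pi_eq_two_mul, div_eq_inv_mul, ← one_div]
  rfl

theorem sphereMeanIntegrand_one : sphereMeanIntegrand 1 = sin := by
  funext x
  rw [sphereMeanIntegrand, sinPowIntegral_one, sinPowIntegral_one, cos_pi_sub, pow_one]
  have h : (1 - cos x) * (1 - -cos x) = sin x * sin x := by
    linear_combination -sin_sq_add_cos_sq x
  rw [h, mul_self_div_self]

theorem sphereMeanIntegrand_pi_sub (k : ℕ) (x : ℝ) :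
    sphereMeanIntegrand k (π - x) = sphereMeanIntegrand k x := by
  rw [sphereMeanIntegrand, sin_pi_sub, sub_sub_cancel, mul_comm, sphereMeanIntegrand]

theorem tendsto_sphereMeanIntegrand_mul_cot_zero (k : ℕ) :
    Tendsto (fun x ↦ sphereMeanIntegrand k x * cot x) (𝓝[≠] 0)
      (𝓝 (sinPowIntegral k π / (k + 1))) := by
  have hlim := tendsto_sinPowIntegral_div_sin_pow_mul k
    (g := fun x ↦ sinPowIntegral k (π - x) * cos x) (by fun_prop)
  rw [sub_zero, cos_zero, mul_one] at hlim
  refine hlim.congr fun x ↦ ?_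
  rw [sphereMeanIntegrand, cot_eq_cos_div_sin, pow_succ]
  ring

theorem tendsto_sphereMeanIntegrand_mul_cot_pi (k : ℕ) :
    Tendsto (fun x ↦ sphereMeanIntegrand k x * cot x) (𝓝[≠] π)
      (𝓝 (-(sinPowIntegral k π / (k + 1)))) := by
  have hreflect : Tendsto (fun x ↦ π - x) (𝓝[≠] π) (𝓝[≠] 0) := by
    simpa using ((hasDerivAt_id π).const_sub π).tendsto_nhdsNE (by simp)
  refine ((tendsto_sphereMeanIntegrand_mul_cot_zero k).comp hreflect).neg.congr fun x ↦ ?_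
  simp only [Function.comp_apply, sphereMeanIntegrand_pi_sub, cot_eq_cos_div_sin, sin_pi_sub,
    cos_pi_sub]
  ring

theorem continuousAt_sphereMeanIntegrand_zero (k : ℕ) :
    ContinuousAt (sphereMeanIntegrand k) 0 := by
  have hlim := tendsto_sinPowIntegral_div_sin_pow_mul k
    (g := fun x ↦ sinPowIntegral k (π - x) * sin x) (by fun_prop)
  rw [sin_zero, mul_zero, zero_div] at hlim
  have hzero : sphereMeanIntegrand k 0 = 0 := by
    rw [sphereMeanIntegrand, sinPowIntegral_zero_right, zero_mul, zero_div]
  rw [continuousAt_iff_punctured_nhds, hzero]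
  refine hlim.congr' ?_
  filter_upwards [eventually_sin_ne_zero_nhdsNE_zero] with x hs
  rw [sphereMeanIntegrand]
  field_simp
  ring

theorem continuousAt_sphereMeanIntegrand_pi (k : ℕ) :
    ContinuousAt (sphereMeanIntegrand k) π := by
  rw [← funext (sphereMeanIntegrand_pi_sub k)]
  refine ContinuousAt.comp' ?_ (by fun_prop)
  rw [sub_self]
  exact continuousAt_sphereMeanIntegrand_zero k

theorem hasDerivAt_sphereMeanIntegrand (k : ℕ) {x : ℝ} (hx : sin x ≠ 0) :
    HasDerivAt (sphereMeanIntegrand k)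
      (sinPowIntegral k (π - x) - sinPowIntegral k x - k * sphereMeanIntegrand k x * cot x) x := by
  have hrefl : HasDerivAt (fun y ↦ sinPowIntegral k (π - y)) (-sin x ^ k) x := by
    simpa using (hasDerivAt_sinPowIntegral k (π - x)).comp_const_sub π x
  have h := ((hasDerivAt_sinPowIntegral k x).mul hrefl).div ((hasDerivAt_sin x).pow k)
    (pow_ne_zero k hx)
  refine h.congr_deriv ?_
  rcases k with _ | k
  · simp only [pow_zero, Pi.pow_apply, Nat.cast_zero]
    ring
  · simp only [sphereMeanIntegrand, cot_eq_cos_div_sin, Pi.mul_apply, Pi.pow_apply,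
      Nat.add_sub_cancel]
    field_simp
    ring

theorem continuousOn_sphereMeanIntegrand (k : ℕ) :
    ContinuousOn (sphereMeanIntegrand k) (Set.Icc 0 π) := by
  rintro x ⟨h0, hπ⟩
  refine ContinuousAt.continuousWithinAt ?_
  rcases h0.eq_or_lt with rfl | h0
  · exact continuousAt_sphereMeanIntegrand_zero k
  rcases hπ.eq_or_lt with rfl | hπ
  · exact continuousAt_sphereMeanIntegrand_pi k
  · exact (hasDerivAt_sphereMeanIntegrand k (sin_pos_of_pos_of_lt_pi h0 hπ).ne').continuousAt

theorem intervalIntegrable_sphereMeanIntegrand (k : ℕ) :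
    IntervalIntegrable (sphereMeanIntegrand k) volume 0 π :=
  (continuousOn_sphereMeanIntegrand k).intervalIntegrable_of_Icc pi_pos.le

theorem sphereMeanIntegrand_add_two (k : ℕ) {x : ℝ} (hx : sin x ≠ 0) :
    (k + 2) ^ 2 * sphereMeanIntegrand (k + 2) x =
      (k + 1) ^ 2 * sphereMeanIntegrand k x / sin x ^ 2
        - (k + 1) * (sinPowIntegral k (π - x) - sinPowIntegral k x) * cot x
        - cos x ^ 2 * sin x ^ k := by
  have hreduce := sinPowIntegral_add_two k (π - x)
  rw [sin_pi_sub, cos_pi_sub] at hreduce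
  calc (k + 2) ^ 2 * sphereMeanIntegrand (k + 2) x
      = (k + 2) * sinPowIntegral (k + 2) x * ((k + 2) * sinPowIntegral (k + 2) (π - x))
          / sin x ^ (k + 2) := by
        rw [sphereMeanIntegrand]
        ring
    _ = _ := by
        rw [sinPowIntegral_add_two, hreduce, sphereMeanIntegrand, cot_eq_cos_div_sin]
        field_simp
        ring

theorem hasDerivAt_sphereMeanIntegrand_mul_cot (k : ℕ) {x : ℝ} (hx : sin x ≠ 0) :
    HasDerivAt (fun y ↦ sphereMeanIntegrand k y * cot y)
      (k * sphereMeanIntegrand k x -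
        ((k + 2) ^ 2 * sphereMeanIntegrand (k + 2) x + cos x ^ 2 * sin x ^ k) / (k + 1)) x := by
  refine ((hasDerivAt_sphereMeanIntegrand k hx).mul (hasDerivAt_cot hx)).congr_deriv ?_
  have hk : (k : ℝ) + 1 ≠ 0 := by positivity
  rw [sphereMeanIntegrand_add_two k hx, cot_eq_cos_div_sin]
  field_simp
  linear_combination -(k * (k + 1) * sphereMeanIntegrand k x) * sin_sq_add_cos_sq x

theorem integral_sphereMeanIntegrand_add_two (k : ℕ) :
    (k + 2) ^ 2 * ∫ x in (0 : ℝ)..π, sphereMeanIntegrand (k + 2) x =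
      k * (k + 1) * (∫ x in (0 : ℝ)..π, sphereMeanIntegrand k x) + 2 * sinPowIntegral k π
        - ∫ x in (0 : ℝ)..π, cos x ^ 2 * sin x ^ k := by
  have hk : (k : ℝ) + 1 ≠ 0 := by positivity
  have hleft := (intervalIntegrable_sphereMeanIntegrand k).const_mul (k : ℝ)
  have hmain := (intervalIntegrable_sphereMeanIntegrand (k + 2)).const_mul ((k + 2 : ℝ) ^ 2)
  have htrig : IntervalIntegrable (fun x ↦ cos x ^ 2 * sin x ^ k) volume 0 π :=
    Continuous.intervalIntegrable (by fun_prop) 0 π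
  have hright := (hmain.add htrig).div_const (k + 1 : ℝ)
  have hFTC := intervalIntegral.integral_eq_sub_of_hasDerivAt_of_tendsto pi_pos
    (fun x hx ↦ hasDerivAt_sphereMeanIntegrand_mul_cot k
      (sin_pos_of_pos_of_lt_pi hx.1 hx.2).ne') (hleft.sub hright)
    ((tendsto_sphereMeanIntegrand_mul_cot_zero k).mono_left (nhdsGT_le_nhdsNE 0))
    ((tendsto_sphereMeanIntegrand_mul_cot_pi k).mono_left (nhdsLT_le_nhdsNE π))
  rw [intervalIntegral.integral_sub hleft hright, intervalIntegral.integral_div,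
    intervalIntegral.integral_add hmain htrig, intervalIntegral.integral_const_mul,
    intervalIntegral.integral_const_mul] at hFTC
  field_simp at hFTC
  linear_combination -hFTC

theorem sphereMean_two : sphereMean 2 = 1 := by
  rw [sphereMean_add_one 1, sphereMeanIntegrand_one, sinPowIntegral_one]
  norm_num

theorem sphereMean_add_three (k : ℕ) :
    (k + 2) * sphereMean (k + 3) =
      k * sphereMean (k + 1) + 1 / ((k : ℝ) + 2) + 1 / ((k : ℝ) + 1) := by
  have hrec := integral_sphereMeanIntegrand_add_two k
  have hJ : sinPowIntegral (k + 2) π = (k + 1) * sinPowIntegral k π / (k + 2) := by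
    rw [← sinPowIntegral_add_two_pi]
    field_simp
  have hcos : ∫ x in (0 : ℝ)..π, cos x ^ 2 * sin x ^ k = sinPowIntegral k π / (k + 2) := by
    rw [← integral_cos_sq_mul_sin_pow]
    field_simp
  have hpos := sinPowIntegral_pi_pos k
  rw [sphereMean_add_one k, sphereMean_add_one (k + 2), hJ]
  rw [hcos] at hrec
  field_simp at hrec ⊢
  linear_combination hrec

theorem sphereMean_three : sphereMean 3 = 3 / 4 := by
  have h := sphereMean_add_three 0
  norm_num at h
  linarith

end

theorem sphere_mean_recursion :
    sphereMean 2 = 1 ∧ sphereMean 3 = 3/4 ∧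
      ∀ n : ℕ, 3 ≤ n →
        ((n:ℝ) - 1) * sphereMean n
          = ((n:ℝ) - 3) * sphereMean (n - 2) + 1 / ((n:ℝ) - 1) + 1 / ((n:ℝ) - 2) := by
  refine ⟨sphereMean_two, sphereMean_three, fun n hn ↦ ?_⟩
  obtain ⟨k, rfl⟩ := Nat.exists_eq_add_of_le' hn
  have cast_sub_one : ((k + 3 : ℕ) : ℝ) - 1 = k + 2 := by push_cast; ring
  have cast_sub_two : ((k + 3 : ℕ) : ℝ) - 2 = k + 1 := by push_cast; ring
  have cast_sub_three : ((k + 3 : ℕ) : ℝ) - 3 = k := by push_cast; ring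
  rw [cast_sub_one, cast_sub_two, cast_sub_three]
  exact sphereMean_add_three k
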